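/- If Re(c - a2 - b2) > 0, then F3(a1, a2; b1, b2; c; x, 1) = (Gamma(c) Gamma(c-a2-b2) / (Gamma(c-a2) Gamma(c-b2))) * 3F2(a1, b1, c-a2-b2; c-a2, c-b2; x) for |x| < 1. -/

import Mathlib

/-!
Summing `F₃` over its second index first reduces the claim to Gauss's theorem. Since
`(c)ₙ₊ₘ = (c)ₙ (c + n)ₘ`, the inner sum is `₂F₁(a₂, b₂; c + n; 1)`, which Gauss's theorem evaluates
as a quotient of Gamma values; `Γ(z + n) = (z)ₙ Γ(z)` turns that quotient into the coefficients of
the `₃F₂`. Writing instead `(c)ₙ₊ₘ = (c)ₘ (c + m)ₙ` gives the absolute convergence that allows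
iterated summation (`summable_double`).

Gauss's theorem (`gauss_sum`) follows from the contiguous relation
`c (c - a - b) F(c) = (c - a) (c - b) F(c + 1)` for `F(c) = ₂F₁(a, b; c; 1)`, which is a
telescoping sum. Iterating it, and using `F(c + n) → 1`, leaves an infinite product that Gauss's
limit formula for `Γ` evaluates. The same limit formula gives the growth of the terms,
`O(n ^ (Re (a + b - c) - 1))`, hence all the convergence needed.
-/

noncomputable def poch (a : ℂ) (n : ℕ) : ℂ := (ascPochhammer ℂ n).eval a

noncomputable def hpg21 (A B C z : ℂ) : ℂ :=
  ∑' n : ℕ, poch A n * poch B n / (poch C n * (n.factorial : ℂ)) * z ^ n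

noncomputable def F3 (a1 a2 b1 b2 c x y : ℂ) : ℂ :=
  ∑' p : ℕ × ℕ, poch a1 p.1 * poch a2 p.2 * poch b1 p.1 * poch b2 p.2 /
    (poch c (p.1 + p.2) * (p.1.factorial : ℂ) * (p.2.factorial : ℂ)) * x ^ p.1 * y ^ p.2

noncomputable def hpg32 (A B C D E z : ℂ) : ℂ :=
  ∑' n : ℕ, poch A n * poch B n * poch C n / (poch D n * poch E n * (n.factorial : ℂ)) * z ^ n

open Filter Topology Asymptotics

/-! ### Rising factorials -/

lemma poch_zero (a : ℂ) : poch a 0 = 1 := by simp [poch]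

lemma poch_succ (a : ℂ) (n : ℕ) : poch a (n + 1) = poch a n * (a + n) := by
  simp [poch, ascPochhammer_succ_eval]

lemma poch_eq_prod (a : ℂ) (n : ℕ) : poch a n = ∏ j ∈ Finset.range n, (a + j) := by
  induction n with
  | zero => simp [poch_zero]
  | succ n ih => rw [poch_succ, Finset.prod_range_succ, ih]

lemma poch_add (a : ℂ) (n m : ℕ) : poch a (n + m) = poch a n * poch (a + n) m := by
  simp [poch_eq_prod, Finset.prod_range_add, add_assoc]

lemma poch_ne_zero {a : ℂ} (ha : ∀ n : ℕ, a ≠ -(n : ℂ)) (n : ℕ) : poch a n ≠ 0 := by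
  rw [poch_eq_prod, Finset.prod_ne_zero_iff]
  intro j _ h
  exact ha j (eq_neg_of_add_eq_zero_left h)

lemma add_nat_ne {a : ℂ} (ha : ∀ n : ℕ, a ≠ -(n : ℂ)) (m : ℕ) :
    ∀ n : ℕ, a + m ≠ -(n : ℂ) := by
  intro n h
  apply ha (m + n)
  push_cast
  linear_combination h

lemma ne_of_re_pos {a : ℂ} (ha : 0 < a.re) : ∀ n : ℕ, a ≠ -(n : ℂ) := by
  rintro n rfl
  simp only [Complex.neg_re, Complex.natCast_re] at ha
  linarith [(Nat.cast_nonneg n : (0 : ℝ) ≤ n)]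

lemma norm_poch_le {w v : ℂ} (h : ∀ j : ℕ, ‖w + j‖ ≤ ‖v + j‖) (n : ℕ) :
    ‖poch w n‖ ≤ ‖poch v n‖ := by
  rw [poch_eq_prod, poch_eq_prod, norm_prod, norm_prod]
  exact Finset.prod_le_prod (fun _ _ => norm_nonneg _) (fun j _ => h j)

lemma norm_add_le_norm_add_add {w : ℂ} (hw : 0 < w.re) (n j : ℕ) :
    ‖w + j‖ ≤ ‖w + n + j‖ := by
  rw [← abs_of_nonneg (norm_nonneg (w + j)), ← abs_of_nonneg (norm_nonneg (w + n + j)),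
    ← sq_le_sq, Complex.sq_norm, Complex.sq_norm, Complex.normSq_apply, Complex.normSq_apply]
  simp only [Complex.add_re, Complex.natCast_re, Complex.add_im, Complex.natCast_im]
  have hn : (0 : ℝ) ≤ n := Nat.cast_nonneg n
  have hj : (0 : ℝ) ≤ j := Nat.cast_nonneg j
  nlinarith [mul_nonneg hn hj, mul_nonneg hn hw.le]

/-! ### Growth of the terms of a Gauss series -/

lemma gammaSeq_mul_poch {a : ℂ} (ha : ∀ n : ℕ, a ≠ -(n : ℂ)) (n : ℕ) :
    Complex.GammaSeq a n * poch a (n + 1) = (n : ℂ) ^ a * n.factorial := by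
  have h := poch_ne_zero ha (n + 1)
  rw [Complex.GammaSeq, ← poch_eq_prod]
  field_simp

/-- Growth of the rising factorial, from Gauss's limit formula for `Γ`. For a pole `a` of `Γ` the
left-hand side vanishes eventually. -/
lemma poch_isBigO (a : ℂ) :
    (fun n : ℕ => poch a (n + 1)) =O[atTop] fun n : ℕ => (n : ℝ) ^ a.re * n.factorial := by
  by_cases ha : ∀ n : ℕ, a ≠ -(n : ℂ)
  · have h1 : (fun n => (Complex.GammaSeq a n)⁻¹) =O[atTop] fun _ => (1 : ℝ) :=
      ((Complex.GammaSeq_tendsto_Gamma a).inv₀ (Complex.Gamma_ne_zero ha)).isBigO_one ℝ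
    have h2 : (fun n : ℕ => (n : ℂ) ^ a * (n.factorial : ℂ)) =O[atTop]
        fun n : ℕ => (n : ℝ) ^ a.re * n.factorial := by
      refine IsBigO.of_bound 1 ?_
      filter_upwards [eventually_gt_atTop 0] with n hn
      rw [norm_mul, Complex.norm_natCast_cpow_of_pos hn, one_mul, norm_mul]
      gcongr
      · exact le_abs_self _
      · simp
    refine ((h1.mul h2).congr' ?_ ?_)
    · filter_upwards [(Complex.GammaSeq_tendsto_Gamma a).eventually_ne
        (Complex.Gamma_ne_zero ha)] with n hn
      rw [← gammaSeq_mul_poch ha, inv_mul_cancel_left₀ hn]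
    · simp
  · push Not at ha
    obtain ⟨k, hk⟩ := ha
    refine IsBigO.of_bound 0 ?_
    filter_upwards [eventually_ge_atTop k] with n hn
    have : poch a (n + 1) = 0 := by
      rw [poch_eq_prod]
      exact Finset.prod_eq_zero (Finset.mem_range.2 (Nat.lt_succ_of_le hn)) (by simp [hk])
    simp [this]

lemma inv_poch_isBigO {c : ℂ} (hc : ∀ n : ℕ, c ≠ -(n : ℂ)) :
    (fun n : ℕ => (poch c (n + 1))⁻¹) =O[atTop]
      fun n : ℕ => ((n : ℝ) ^ c.re * n.factorial)⁻¹ := by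
  have h1 : (fun n => Complex.GammaSeq c n) =O[atTop] fun _ => (1 : ℝ) :=
    (Complex.GammaSeq_tendsto_Gamma c).isBigO_one ℝ
  have h2 : (fun n : ℕ => ((n : ℂ) ^ c * (n.factorial : ℂ))⁻¹) =O[atTop]
      fun n : ℕ => ((n : ℝ) ^ c.re * n.factorial)⁻¹ := by
    refine IsBigO.of_bound 1 ?_
    filter_upwards [eventually_gt_atTop 0] with n hn
    rw [norm_inv, norm_mul, Complex.norm_natCast_cpow_of_pos hn, one_mul, norm_inv, norm_mul]
    rw [Real.norm_of_nonneg (by positivity : (0 : ℝ) ≤ (n : ℝ) ^ c.re)]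
    simp
  refine ((h1.mul h2).congr' ?_ ?_)
  · filter_upwards [eventually_gt_atTop 0] with n hn
    have h0 : (n : ℂ) ^ c * (n.factorial : ℂ) ≠ 0 :=
      mul_ne_zero (by
        rw [← norm_pos_iff]; exact Complex.norm_natCast_cpow_pos_of_pos hn c)
        (by exact_mod_cast n.factorial_ne_zero)
    rw [← gammaSeq_mul_poch hc] at h0 ⊢
    have := left_ne_zero_of_mul h0
    have := right_ne_zero_of_mul h0
    field_simp
  · simp

/-- The coefficient of `z ^ n` in the Gauss series `₂F₁(a, b; c; z)`. -/
noncomputable def gaussTerm (a b c : ℂ) (n : ℕ) : ℂ :=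
  poch a n * poch b n / (poch c n * (n.factorial : ℂ))

lemma succ_mul_gaussTerm_isBigO (a b : ℂ) {c : ℂ} (hc : ∀ n : ℕ, c ≠ -(n : ℂ)) :
    (fun n : ℕ => ((n : ℂ) + 1) * gaussTerm a b c (n + 1)) =O[atTop]
      fun n : ℕ => (n : ℝ) ^ (-(c - a - b).re) := by
  have h3 : (fun n : ℕ => ((n.factorial : ℂ))⁻¹) =O[atTop]
      fun n : ℕ => ((n.factorial : ℝ))⁻¹ := IsBigO.of_bound 1 (by simp)
  refine ((((poch_isBigO a).mul (poch_isBigO b)).mul (inv_poch_isBigO hc)).mul h3).congr' ?_ ?_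
  · refine Eventually.of_forall fun n => ?_
    have h1 : (n.factorial : ℂ) ≠ 0 := by exact_mod_cast n.factorial_ne_zero
    have h2 : (n : ℂ) + 1 ≠ 0 := by exact_mod_cast n.succ_ne_zero
    have h4 := poch_ne_zero hc (n + 1)
    simp only [gaussTerm, Nat.factorial_succ]
    push_cast
    field_simp
  · filter_upwards [eventually_gt_atTop 0] with n hn
    have hn' : (0 : ℝ) < n := by exact_mod_cast hn
    have h1 : (n.factorial : ℝ) ≠ 0 := by exact_mod_cast n.factorial_ne_zero
    have h2 : (n : ℝ) ^ (-(c - a - b).re) =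
        (n : ℝ) ^ a.re * (n : ℝ) ^ b.re * ((n : ℝ) ^ c.re)⁻¹ := by
      rw [← Real.rpow_neg hn'.le, ← Real.rpow_add hn', ← Real.rpow_add hn']
      congr 1
      simp only [Complex.sub_re]; ring
    have h3 : (n : ℝ) ^ c.re ≠ 0 := (Real.rpow_pos_of_pos hn' _).ne'
    rw [h2]
    field_simp

lemma gaussTerm_succ_isBigO (a b : ℂ) {c : ℂ} (hc : ∀ n : ℕ, c ≠ -(n : ℂ)) :
    (fun n : ℕ => gaussTerm a b c (n + 1)) =O[atTop]
      fun n : ℕ => (n : ℝ) ^ (-(c - a - b).re - 1) := by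
  have h1 : (fun n : ℕ => ((n : ℂ) + 1)⁻¹) =O[atTop] fun n : ℕ => ((n : ℝ))⁻¹ := by
    refine IsBigO.of_bound 1 ?_
    filter_upwards [eventually_gt_atTop 0] with n hn
    have hn' : (0 : ℝ) < n := by exact_mod_cast hn
    have : ‖(n : ℂ) + 1‖ = n + 1 := by
      exact_mod_cast Complex.norm_natCast (n + 1)
    rw [norm_inv, this, norm_inv, Real.norm_of_nonneg hn'.le, one_mul]
    exact inv_anti₀ hn' (by linarith)
  refine ((h1.mul (succ_mul_gaussTerm_isBigO a b hc))).congr' ?_ ?_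
  · refine Eventually.of_forall fun n => ?_
    have h2 : (n : ℂ) + 1 ≠ 0 := by exact_mod_cast n.succ_ne_zero
    simp only
    rw [inv_mul_cancel_left₀ h2]
  · filter_upwards [eventually_gt_atTop 0] with n hn
    have hn' : (0 : ℝ) < n := by exact_mod_cast hn
    rw [Real.rpow_sub_one hn'.ne', div_eq_inv_mul]

lemma summable_gaussTerm {a b c : ℂ} (hc : ∀ n : ℕ, c ≠ -(n : ℂ))
    (hre : 0 < (c - a - b).re) : Summable (gaussTerm a b c) := by
  rw [← summable_nat_add_iff 1]
  exact summable_of_isBigO_nat (Real.summable_nat_rpow.2 (by linarith))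
    (gaussTerm_succ_isBigO a b hc)

lemma summable_gaussTerm_mul_pow (a b : ℂ) {c x : ℂ} (hc : ∀ n : ℕ, c ≠ -(n : ℂ))
    (hx : ‖x‖ < 1) : Summable fun n => gaussTerm a b c n * x ^ n := by
  rw [← summable_nat_add_iff 1]
  obtain ⟨k, hk⟩ := exists_nat_ge (-(c - a - b).re - 1)
  have h1 : (fun n : ℕ => (n : ℝ) ^ (-(c - a - b).re - 1)) =O[atTop]
      fun n : ℕ => (n : ℂ) ^ k := by
    refine IsBigO.of_bound 1 ?_
    filter_upwards [eventually_gt_atTop 0] with n hn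
    have hn' : (1 : ℝ) ≤ n := by exact_mod_cast hn
    rw [Real.norm_of_nonneg (by positivity), norm_pow, Complex.norm_natCast, one_mul,
      ← Real.rpow_natCast]
    exact Real.rpow_le_rpow_of_exponent_le hn' hk
  have h2 := ((gaussTerm_succ_isBigO a b hc).trans h1).mul
    (isBigO_refl (fun n : ℕ => x ^ n) atTop)
  have h3 : Summable fun n : ℕ => gaussTerm a b c (n + 1) * x ^ n :=
    summable_of_isBigO_nat (summable_norm_pow_mul_geometric_of_norm_lt_one k hx) h2.norm_right
  refine (h3.mul_right x).congr fun n => ?_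
  rw [pow_succ]; ring

/-! ### Gauss's summation theorem -/

lemma gaussTerm_zero (a b c : ℂ) : gaussTerm a b c 0 = 1 := by simp [gaussTerm, poch_zero]

lemma gaussTerm_succ (a b : ℂ) {c : ℂ} (hc : ∀ n : ℕ, c ≠ -(n : ℂ)) (n : ℕ) :
    gaussTerm a b c (n + 1) * ((c + n) * (n + 1)) = gaussTerm a b c n * ((a + n) * (b + n)) := by
  have h1 : (n.factorial : ℂ) ≠ 0 := by exact_mod_cast n.factorial_ne_zero
  have h2 : (n : ℂ) + 1 ≠ 0 := by exact_mod_cast n.succ_ne_zero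
  have h3 := poch_ne_zero hc n
  have h4 : c + n ≠ 0 := by simpa using add_nat_ne hc n 0
  simp only [gaussTerm, poch_succ, Nat.factorial_succ]
  push_cast
  field_simp

lemma gaussTerm_shift (a b : ℂ) {c : ℂ} (hc : ∀ n : ℕ, c ≠ -(n : ℂ)) (n : ℕ) :
    gaussTerm a b (c + 1) n * (c + n) = gaussTerm a b c n * c := by
  have h1 : (n.factorial : ℂ) ≠ 0 := by exact_mod_cast n.factorial_ne_zero
  have h3 := poch_ne_zero hc n
  have h5 := poch_ne_zero (add_nat_ne hc 1) n
  have h4 : poch c n * (c + n) = c * poch (c + 1) n := by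
    have := poch_add c 1 n
    rw [add_comm 1 n, poch_succ, poch_succ, poch_zero] at this
    simpa using this
  simp only [gaussTerm]
  simp only [Nat.cast_one] at h5
  field_simp
  linear_combination poch a n * poch b n * h4

/-- The contiguous relation at `z = 1`. The difference of its two sides telescopes, with
primitive `-c n tₙ`, where `tₙ` is the `n`-th term of the series at `c`. -/
lemma gauss_contiguous {a b c : ℂ} (hc : ∀ n : ℕ, c ≠ -(n : ℂ)) (hre : 0 < (c - a - b).re) :
    c * (c - a - b) * ∑' n, gaussTerm a b c n =
      (c - a) * (c - b) * ∑' n, gaussTerm a b (c + 1) n := by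
  have hc1 : ∀ n : ℕ, c + 1 ≠ -(n : ℂ) := by simpa using add_nat_ne hc 1
  have hre1 : 0 < (c + 1 - a - b).re := by
    simp only [Complex.sub_re, Complex.add_re, Complex.one_re] at hre ⊢; linarith
  have s1 := summable_gaussTerm hc hre
  have s2 := summable_gaussTerm hc1 hre1
  have key := (s1.hasSum.mul_left (c * (c - a - b))).sub (s2.hasSum.mul_left ((c - a) * (c - b)))
  have part : ∀ N : ℕ, ∑ n ∈ Finset.range N, (c * (c - a - b) * gaussTerm a b c n -
      (c - a) * (c - b) * gaussTerm a b (c + 1) n) = -c * (N * gaussTerm a b c N) := by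
    intro N
    induction N with
    | zero => simp
    | succ n ih =>
      rw [Finset.sum_range_succ, ih]
      have h4 : c + n ≠ 0 := by simpa using add_nat_ne hc n 0
      apply mul_right_cancel₀ h4
      push_cast
      linear_combination c * gaussTerm_succ a b hc n - (c - a) * (c - b) * gaussTerm_shift a b hc n
  have lim : Tendsto (fun N : ℕ => -c * (N * gaussTerm a b c N)) atTop (𝓝 0) := by
    rw [← tendsto_add_atTop_iff_nat 1]
    have h0 : Tendsto (fun n : ℕ => (n : ℝ) ^ (-(c - a - b).re)) atTop (𝓝 0) :=
      (tendsto_rpow_neg_atTop hre).comp tendsto_natCast_atTop_atTop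
    have := ((succ_mul_gaussTerm_isBigO a b hc).trans_tendsto h0).const_mul (-c)
    simpa using this
  have := tendsto_nhds_unique (key.tendsto_sum_nat.congr part) lim
  exact sub_eq_zero.1 this

lemma gauss_contiguous_iterate {a b c : ℂ} (hc : ∀ n : ℕ, c ≠ -(n : ℂ))
    (hre : 0 < (c - a - b).re) (n : ℕ) :
    poch c n * poch (c - a - b) n * ∑' k, gaussTerm a b c k =
      poch (c - a) n * poch (c - b) n * ∑' k, gaussTerm a b (c + n) k := by
  induction n with
  | zero => simp [poch_zero]
  | succ n ih =>
    have hre' : 0 < (c + n - a - b).re := by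
      simp only [Complex.sub_re, Complex.add_re, Complex.natCast_re] at hre ⊢
      linarith [(Nat.cast_nonneg n : (0 : ℝ) ≤ n)]
    have h := gauss_contiguous (add_nat_ne hc n) hre'
    simp only [poch_succ]
    rw [show c + ((n + 1 : ℕ) : ℂ) = c + n + 1 by push_cast; ring]
    linear_combination (c + n) * (c - a - b + n) * ih + poch (c - a) n * poch (c - b) n * h

/-- For `Re c > 0` the tail of the series at `c + n` is at most `|c| / |c + n|` times a constant. -/
lemma tendsto_gauss_of_re_pos {a b c : ℂ} (hc0 : 0 < c.re) (hre : 0 < (c - a - b).re) :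
    Tendsto (fun n : ℕ => ∑' k, gaussTerm a b (c + n) k) atTop (𝓝 1) := by
  have hc := ne_of_re_pos hc0
  have s1 : Summable fun k => ‖gaussTerm a b c (k + 1)‖ :=
    ((summable_nat_add_iff 1).2 (summable_gaussTerm hc hre)).norm
  have bound : ∀ n k : ℕ, ‖gaussTerm a b (c + n) (k + 1)‖ ≤
      ‖c‖ / ‖c + n‖ * ‖gaussTerm a b c (k + 1)‖ := by
    intro n k
    have hcn : c + n ≠ 0 := by simpa using add_nat_ne hc n 0
    have hc' : c ≠ 0 := by simpa using hc 0
    have e : ∀ v : ℂ, poch v (k + 1) = v * poch (v + 1) k := by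
      intro v
      rw [add_comm k 1, poch_add, poch_succ, poch_zero]; simp
    have hle : ‖poch (c + 1) k‖ ≤ ‖poch (c + n + 1) k‖ := by
      refine norm_poch_le (fun j => ?_) k
      have := norm_add_le_norm_add_add (w := c + 1)
        (by simp only [Complex.add_re, Complex.one_re]; linarith) n j
      rwa [add_right_comm c 1 (n : ℂ)] at this
    have hp1 : 0 < ‖poch (c + 1) k‖ := by
      rw [norm_pos_iff]; simpa using poch_ne_zero (add_nat_ne hc 1) k
    have hc'' : 0 < ‖c‖ := norm_pos_iff.2 hc'
    have hcn' : 0 < ‖c + n‖ := norm_pos_iff.2 hcn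
    have hf : (0 : ℝ) < (k + 1).factorial := by exact_mod_cast (k + 1).factorial_pos
    simp only [gaussTerm, e c, e (c + n), norm_div, norm_mul, Complex.norm_natCast]
    calc _ ≤ ‖poch a (k + 1)‖ * ‖poch b (k + 1)‖ /
          (‖c + n‖ * ‖poch (c + 1) k‖ * (k + 1).factorial) := by gcongr
      _ = _ := by field_simp
  have h0 : Tendsto (fun n : ℕ => ‖c‖ / ‖c + n‖ * ∑' k, ‖gaussTerm a b c (k + 1)‖)
      atTop (𝓝 0) := by
    have h1 : Tendsto (fun n : ℕ => ‖c + n‖) atTop atTop := by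
      refine tendsto_atTop_mono (fun n => ?_) (tendsto_natCast_atTop_atTop (R := ℝ))
      refine le_trans ?_ (Complex.re_le_norm _)
      simp only [Complex.add_re, Complex.natCast_re]; linarith
    simpa using (h1.const_div_atTop ‖c‖).mul_const (∑' k, ‖gaussTerm a b c (k + 1)‖)
  rw [tendsto_iff_norm_sub_tendsto_zero]
  refine squeeze_zero (fun _ => norm_nonneg _) (fun n => ?_) h0
  have sm := s1.mul_left (‖c‖ / ‖c + n‖)
  have st : Summable fun k => gaussTerm a b (c + n) (k + 1) :=
    Summable.of_norm_bounded sm (bound n)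
  rw [((summable_nat_add_iff 1).1 st).tsum_eq_zero_add, gaussTerm_zero, add_sub_cancel_left,
    ← tsum_mul_left]
  exact tsum_of_norm_bounded sm.hasSum (bound n)

lemma tendsto_gauss {a b c : ℂ} (hre : 0 < (c - a - b).re) :
    Tendsto (fun n : ℕ => ∑' k, gaussTerm a b (c + n) k) atTop (𝓝 1) := by
  obtain ⟨N, hN⟩ := exists_nat_gt (-c.re)
  rw [← tendsto_add_atTop_iff_nat N]
  have hN0 : (0 : ℝ) ≤ N := Nat.cast_nonneg N
  have := tendsto_gauss_of_re_pos (a := a) (b := b) (c := c + N)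
    (by simp only [Complex.add_re, Complex.natCast_re]; linarith)
    (by simp only [Complex.sub_re, Complex.add_re, Complex.natCast_re] at hre ⊢; linarith)
  refine this.congr fun n => ?_
  rw [show c + ((n + N : ℕ) : ℂ) = c + N + n by push_cast; ring]

/-- **Gauss's summation theorem** for `₂F₁(a, b; c; 1)`. -/
theorem gauss_sum {a b c : ℂ} (hc : ∀ n : ℕ, c ≠ -(n : ℂ)) (hca : ∀ n : ℕ, c - a ≠ -(n : ℂ))
    (hcb : ∀ n : ℕ, c - b ≠ -(n : ℂ)) (hre : 0 < (c - a - b).re) :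
    ∑' k, gaussTerm a b c k = Complex.Gamma c * Complex.Gamma (c - a - b) /
      (Complex.Gamma (c - a) * Complex.Gamma (c - b)) := by
  have hcab := ne_of_re_pos hre
  have key : ∀ᶠ n : ℕ in atTop,
      (Complex.GammaSeq (c - a) n * Complex.GammaSeq (c - b) n) * ∑' k, gaussTerm a b c k =
      (Complex.GammaSeq c n * Complex.GammaSeq (c - a - b) n) *
        ∑' k, gaussTerm a b (c + (n + 1 : ℕ)) k := by
    filter_upwards [eventually_gt_atTop 0] with n hn
    have hn' : (n : ℂ) ≠ 0 := by exact_mod_cast hn.ne'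
    have h := gauss_contiguous_iterate hc hre (n + 1)
    have e1 := gammaSeq_mul_poch hc n
    have e2 := gammaSeq_mul_poch hca n
    have e3 := gammaSeq_mul_poch hcb n
    have e4 := gammaSeq_mul_poch hcab n
    have p1 := poch_ne_zero hc (n + 1)
    have p2 := poch_ne_zero hca (n + 1)
    have p3 := poch_ne_zero hcb (n + 1)
    have p4 := poch_ne_zero hcab (n + 1)
    have e5 : (n : ℂ) ^ (c - a) * (n : ℂ) ^ (c - b) = (n : ℂ) ^ c * (n : ℂ) ^ (c - a - b) := by
      rw [← Complex.cpow_add _ _ hn', ← Complex.cpow_add _ _ hn']; congr 1; ring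
    -- the powers of `n` cancel, as `(c - a) + (c - b) = c + (c - a - b)`
    have e6 : (Complex.GammaSeq (c - a) n * poch (c - a) (n + 1)) *
        (Complex.GammaSeq (c - b) n * poch (c - b) (n + 1)) =
        (Complex.GammaSeq c n * poch c (n + 1)) *
        (Complex.GammaSeq (c - a - b) n * poch (c - a - b) (n + 1)) := by
      rw [e1, e2, e3, e4]; linear_combination (n.factorial : ℂ) ^ 2 * e5
    apply mul_left_cancel₀ (mul_ne_zero (mul_ne_zero p2 p3) (mul_ne_zero p1 p4))
    linear_combination (poch c (n + 1) * poch (c - a - b) (n + 1) * ∑' k, gaussTerm a b c k) * e6 +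
      (poch c (n + 1) * poch (c - a - b) (n + 1)) * Complex.GammaSeq c n *
        Complex.GammaSeq (c - a - b) n * h
  have l1 := ((Complex.GammaSeq_tendsto_Gamma (c - a)).mul
    (Complex.GammaSeq_tendsto_Gamma (c - b))).mul_const (∑' k, gaussTerm a b c k)
  have l2 := ((Complex.GammaSeq_tendsto_Gamma c).mul
    (Complex.GammaSeq_tendsto_Gamma (c - a - b))).mul
    ((tendsto_add_atTop_iff_nat 1).2 (tendsto_gauss hre))
  have := tendsto_nhds_unique (l1.congr' key) l2
  rw [mul_one] at this
  rw [eq_div_iff (mul_ne_zero (Complex.Gamma_ne_zero hca) (Complex.Gamma_ne_zero hcb)), ← this]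
  ring

/-! ### The double series -/

/-- Absolute convergence of the double series. Once `Re (c + m) ≥ 1` one has
`|(c + m)ₙ| ≥ n!`, so those rows are dominated by the product of two convergent series;
the finitely many other rows converge geometrically. -/
lemma summable_double {a1 a2 b1 b2 c x : ℂ} (hc : ∀ n : ℕ, c ≠ -(n : ℂ))
    (hre : 0 < (c - a2 - b2).re) (hx : ‖x‖ < 1) :
    Summable fun p : ℕ × ℕ =>
      gaussTerm a2 b2 c p.1 * (gaussTerm a1 b1 (c + p.1) p.2 * x ^ p.2) := by
  apply Summable.of_norm
  rw [summable_prod_of_nonneg (fun _ => norm_nonneg _)]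
  have row : ∀ m : ℕ, Summable fun n => ‖gaussTerm a1 b1 (c + m) n * x ^ n‖ := fun m =>
    (summable_gaussTerm_mul_pow a1 b1 (add_nat_ne hc m) hx).norm
  have row1 : Summable fun n => ‖gaussTerm a1 b1 1 n * x ^ n‖ :=
    (summable_gaussTerm_mul_pow a1 b1 (ne_of_re_pos (by simp)) hx).norm
  simp only [norm_mul (gaussTerm a2 b2 c _)]
  refine ⟨fun m => (row m).mul_left _, ?_⟩
  simp only [tsum_mul_left]
  obtain ⟨M, hM⟩ := exists_nat_gt (1 - c.re)
  rw [← summable_nat_add_iff M]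
  have s2 := ((summable_nat_add_iff M).2 (summable_gaussTerm hc hre).norm).mul_right
    (∑' n, ‖gaussTerm a1 b1 1 n * x ^ n‖)
  refine Summable.of_nonneg_of_le
    (fun m => mul_nonneg (norm_nonneg _) (tsum_nonneg fun _ => norm_nonneg _)) (fun m => ?_) s2
  gcongr ‖_‖ * ?_
  refine (row (m + M)).tsum_le_tsum (fun n => ?_) row1
  have hle : ‖poch 1 n‖ ≤ ‖poch (c + (m + M : ℕ)) n‖ := by
    refine norm_poch_le (fun j => ?_) n
    refine le_trans ?_ (Complex.re_le_norm _)
    have h1 : ‖(1 : ℂ) + j‖ = 1 + j := by exact_mod_cast Complex.norm_natCast (1 + j)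
    rw [h1]
    simp only [Complex.add_re, Complex.natCast_re]
    push_cast
    linarith [(Nat.cast_nonneg m : (0 : ℝ) ≤ m)]
  have hp : 0 < ‖poch 1 n‖ := norm_pos_iff.2 (poch_ne_zero (ne_of_re_pos (by simp)) n)
  have hf : (0 : ℝ) < n.factorial := by exact_mod_cast n.factorial_pos
  simp only [gaussTerm, norm_mul, norm_div, Complex.norm_natCast]
  gcongr

lemma F3_term (a1 a2 b1 b2 x : ℂ) {c u v : ℂ} (n m : ℕ) (hu : poch c (n + m) = u * v) :
    poch a1 n * poch a2 m * poch b1 n * poch b2 m /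
      (poch c (n + m) * (n.factorial : ℂ) * (m.factorial : ℂ)) * x ^ n * 1 ^ m =
    poch a2 m * poch b2 m / (u * m.factorial) *
      (poch a1 n * poch b1 n / (v * n.factorial) * x ^ n) := by
  rw [hu, one_pow]
  simp only [div_eq_mul_inv, mul_inv]
  ring

lemma Gamma_add_nat {z : ℂ} (hz : ∀ n : ℕ, z ≠ -(n : ℂ)) (n : ℕ) :
    Complex.Gamma (z + n) = poch z n * Complex.Gamma z := by
  induction n with
  | zero => simp [poch_zero]
  | succ n ih =>
    have h : z + n ≠ 0 := by simpa using add_nat_ne hz n 0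
    rw [poch_succ, Nat.cast_succ, ← add_assoc, Complex.Gamma_add_one _ h, ih]
    ring

theorem F3_y_eq_one (a1 a2 b1 b2 c x : ℂ) (hc : ∀ n : ℕ, c ≠ -(n : ℂ))
    (hca : ∀ n : ℕ, c - a2 ≠ -(n : ℂ)) (hcb : ∀ n : ℕ, c - b2 ≠ -(n : ℂ))
    (hre : 0 < (c - a2 - b2).re) (hx : ‖x‖ < 1) :
    F3 a1 a2 b1 b2 c x 1 =
      Complex.Gamma c * Complex.Gamma (c - a2 - b2) /
        (Complex.Gamma (c - a2) * Complex.Gamma (c - b2)) *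
        hpg32 a1 b1 (c - a2 - b2) (c - a2) (c - b2) x := by
  have hs : Summable fun p : ℕ × ℕ => poch a1 p.1 * poch a2 p.2 * poch b1 p.1 * poch b2 p.2 /
      (poch c (p.1 + p.2) * (p.1.factorial : ℂ) * (p.2.factorial : ℂ)) * x ^ p.1 * 1 ^ p.2 := by
    refine (summable_double (a1 := a1) (b1 := b1) hc hre hx).prod_symm.congr fun p => ?_
    exact (F3_term a1 a2 b1 b2 x p.1 p.2 (by rw [add_comm, poch_add]; rfl)).symm
  rw [F3, hs.tsum_prod, hpg32, ← tsum_mul_left]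
  refine tsum_congr fun n => ?_
  have hsub : ∀ d : ℂ, c + n - d = c - d + n := fun d => by ring
  have hcab := ne_of_re_pos hre
  have g := gauss_sum (a := a2) (b := b2) (add_nat_ne hc n)
    (by rw [hsub]; exact add_nat_ne hca n) (by rw [hsub]; exact add_nat_ne hcb n)
    (by
      simp only [Complex.sub_re, Complex.add_re, Complex.natCast_re] at hre ⊢
      linarith [(Nat.cast_nonneg n : (0 : ℝ) ≤ n)])
  rw [show c + n - a2 - b2 = c - a2 - b2 + n by ring, hsub, hsub, Gamma_add_nat hc,
    Gamma_add_nat hca, Gamma_add_nat hcb, Gamma_add_nat hcab] at g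
  have e : ∀ m : ℕ, poch a1 n * poch a2 m * poch b1 n * poch b2 m /
      (poch c (n + m) * (n.factorial : ℂ) * (m.factorial : ℂ)) * x ^ n * 1 ^ m =
      gaussTerm a2 b2 (c + n) m * (gaussTerm a1 b1 c n * x ^ n) := fun m =>
    F3_term a1 a2 b1 b2 x n m (by rw [poch_add, mul_comm])
  simp only [e]
  rw [tsum_mul_right, g, gaussTerm]
  have p1 := poch_ne_zero hc n
  have p2 := poch_ne_zero hca n
  have p3 := poch_ne_zero hcb n
  have g2 := Complex.Gamma_ne_zero hca
  have g3 := Complex.Gamma_ne_zero hcb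
  have hf : (n.factorial : ℂ) ≠ 0 := by exact_mod_cast n.factorial_ne_zero
  field_simp
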